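/- Fix an integer m ≥ 1. There exists a constant C > 0, independent of M, such that for every integer M ≥ 2 and every m-times continuously differentiable function f : ℝ → ℝ, the truncated Legendre series L_{M−1}(f) satisfies ‖f − L_{M−1}(f)‖_{L²(−1,1)} ≤ C (M−1)^{−m} |f|_{H^{m,M−1}(−1,1)}. -/

import Mathlib

/-!
The estimate rests on two facts about `w = 1 - x²`. The Sturm-Liouville operator
`q ↦ -(w q')'` is symmetric, does not raise degrees, and acts on the leading coefficient of a
polynomial of degree `n` as multiplication by `n (n + 1)`. Since the Legendre polynomial `P_n` is
orthogonal to all polynomials of lower degree (Rodrigues' formula and repeated integration by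
parts), its leading component can be peeled off orthogonally both in `L²` and in the energy
`∫ w p'²`; an induction on the degree gives `M (M + 1) ‖p‖² ≤ ∫ w p'²` for every polynomial `p`
orthogonal to the polynomials of degree less than `M` (`spectral_gap`).

With the normalisation `‖P_n‖² = 2 / (2 n + 1)` (`legPoly_norm`), the truncated series
`L_{M-1} f` is the best `L²` approximation of `f` of degree less than `M` (`legTrunc_best`).
The spectral gap and density of polynomials in `C¹([-1, 1])` then give
`M ‖f - L_{M-1} f‖ ≤ ‖f'‖` (`C1_estimate`). Applying this to `f - Q`, where `Q` is an antiderivative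
of `L_{M-2} (f')`, and using best approximation, one derivative after another yields
`M (M - 1) ⋯ (M - j + 1) ‖f - L_{M-1} f‖ ≤ ‖f^{(j)}‖` for `j ≤ M` (`higher_estimate`).

For `j = min m M` the product on the left is at least `(M - 1)^m / m^m`
(`pow_le_descFactorial`), and `‖f^{(j)}‖` is one of the terms of the seminorm, so `C = m^m` works.
-/


open intervalIntegral

/-- The `m`-th Legendre polynomial, via Rodrigues' formula. -/
noncomputable def legendreP (m : ℕ) : ℝ → ℝ :=
  fun x => (1 / ((2 : ℝ) ^ m * (Nat.factorial m : ℝ))) *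
    iteratedDeriv m (fun y : ℝ => (y ^ 2 - 1) ^ m) x

/-- The truncated Legendre series `L_{M-1}(f)` of degree `M - 1` on `(-1, 1)`. -/
noncomputable def legTrunc (M : ℕ) (f : ℝ → ℝ) : ℝ → ℝ :=
  fun x => ∑ m' ∈ Finset.range M,
    ((2 * (m' : ℝ) + 1) / 2) * (∫ t in (-1 : ℝ)..1, f t * legendreP m' t) * legendreP m' x

/-- The seminorm `|f|_{H^{m,M-1}(-1,1)}`. -/
noncomputable def legSemiNorm (m M : ℕ) (f : ℝ → ℝ) : ℝ :=
  Real.sqrt (∑ j ∈ Finset.Icc (min m M) m,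
    ∫ x in (-1 : ℝ)..1, (iteratedDeriv j f x) ^ 2)

open Polynomial

/-! ### Integration of polynomials over `[-1, 1]` -/

/-- Integration over `[-1, 1]`, as a linear functional on real polynomials. -/
noncomputable def polyInt : ℝ[X] →ₗ[ℝ] ℝ where
  toFun p := ∫ x in (-1 : ℝ)..1, p.eval x
  map_add' p q := by
    simp only [eval_add]
    exact intervalIntegral.integral_add (p.continuous.intervalIntegrable _ _)
      (q.continuous.intervalIntegrable _ _)
  map_smul' c p := by simp

theorem polyInt_apply (p : ℝ[X]) : polyInt p = ∫ x in (-1 : ℝ)..1, p.eval x := rfl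

theorem polyInt_C_mul (c : ℝ) (p : ℝ[X]) : polyInt (C c * p) = c * polyInt p := by
  rw [← smul_eq_C_mul, map_smul, smul_eq_mul]

theorem polyInt_derivative (p : ℝ[X]) :
    polyInt (derivative p) = p.eval 1 - p.eval (-1) := by
  rw [polyInt_apply]
  exact intervalIntegral.integral_eq_sub_of_hasDerivAt (fun x _ => p.hasDerivAt x)
    (p.derivative.continuous.intervalIntegrable _ _)

theorem polyInt_by_parts (p q : ℝ[X]) (h1 : p.eval 1 = 0) (h2 : p.eval (-1) = 0) :
    polyInt (derivative p * q) = -polyInt (p * derivative q) := by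
  have h := polyInt_derivative (p * q)
  rw [derivative_mul, map_add, eval_mul, eval_mul, h1, h2] at h
  linarith

theorem polyInt_sq_nonneg (p : ℝ[X]) : 0 ≤ polyInt (p * p) := by
  rw [polyInt_apply]
  refine intervalIntegral.integral_nonneg (by norm_num) fun x _ => ?_
  rw [eval_mul]
  exact mul_self_nonneg _

theorem polyInt_weight_nonneg (p : ℝ[X]) : 0 ≤ polyInt ((1 - X ^ 2) * p * p) := by
  rw [polyInt_apply]
  refine intervalIntegral.integral_nonneg (by norm_num) fun x hx => ?_
  simp only [eval_mul, eval_sub, eval_one, eval_pow, eval_X]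
  rw [mul_assoc]
  exact mul_nonneg (by nlinarith [hx.1, hx.2]) (mul_self_nonneg _)

theorem polyInt_weight_le (p : ℝ[X]) : polyInt ((1 - X ^ 2) * p * p) ≤ polyInt (p * p) := by
  have h : polyInt (p * p) - polyInt ((1 - X ^ 2) * p * p) = polyInt ((X * p) * (X * p)) := by
    rw [← map_sub]; congr 1; ring
  linarith [polyInt_sq_nonneg (X * p)]

theorem mem_degreeLT_iff_coeff {n : ℕ} {q : ℝ[X]} :
    q ∈ degreeLT ℝ n ↔ ∀ k, n ≤ k → q.coeff k = 0 := by
  rw [mem_degreeLT, degree_lt_iff_coeff_zero]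

theorem mem_degreeLT_mono {m n : ℕ} (h : m ≤ n) {q : ℝ[X]} (hq : q ∈ degreeLT ℝ m) :
    q ∈ degreeLT ℝ n :=
  degreeLT_mono h hq

theorem derivative_mem {k : ℕ} {q : ℝ[X]} (hq : q ∈ degreeLT ℝ (k + 1)) :
    derivative q ∈ degreeLT ℝ k := by
  rw [mem_degreeLT_iff_coeff] at hq ⊢
  intro j hj
  rw [coeff_derivative, hq (j + 1) (by omega), zero_mul]

/-! ### Orthogonality and normalisation of the Legendre polynomials -/

/-- The boundary terms in the repeated integration by parts of Rodrigues' formula vanish. -/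
theorem eval_iterate_rodrigues {n k : ℕ} (hk : k < n) {a : ℝ} (ha : a ^ 2 = 1) :
    (derivative^[k] ((X ^ 2 - 1 : ℝ[X]) ^ n)).eval a = 0 := by
  have h := pow_sub_dvd_iterate_derivative_pow (X ^ 2 - 1 : ℝ[X]) n k
  obtain ⟨r, hr⟩ := h
  rw [hr]
  simp [ha, Nat.sub_ne_zero_of_lt hk]

theorem polyInt_iterate_rodrigues (n : ℕ) : ∀ k ≤ n, ∀ q ∈ degreeLT ℝ k,
    polyInt (derivative^[k] ((X ^ 2 - 1 : ℝ[X]) ^ n) * q) = 0 := by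
  intro k
  induction k with
  | zero =>
    intro _ q hq
    have : q = 0 := by
      ext j
      exact mem_degreeLT_iff_coeff.1 hq j (Nat.zero_le _)
    simp [this]
  | succ k ih =>
    intro hk q hq
    rw [Function.iterate_succ_apply', polyInt_by_parts _ _
      (eval_iterate_rodrigues hk (by norm_num)) (eval_iterate_rodrigues hk (by norm_num)),
      ih (by omega) _ (derivative_mem hq), neg_zero]

/-- The `n`-th Legendre polynomial as an element of `ℝ[X]`. -/
noncomputable def legPoly (n : ℕ) : ℝ[X] :=
  C (1 / ((2 : ℝ) ^ n * (Nat.factorial n : ℝ))) * derivative^[n] ((X ^ 2 - 1) ^ n)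

theorem iteratedDeriv_eval (p : ℝ[X]) (n : ℕ) :
    iteratedDeriv n (fun x => p.eval x) = fun x => (derivative^[n] p).eval x := by
  induction n with
  | zero => simp
  | succ n ih =>
    rw [iteratedDeriv_succ, ih, Function.iterate_succ_apply']
    ext x
    exact Polynomial.deriv _

theorem legendreP_eq_eval (n : ℕ) (x : ℝ) : legendreP n x = (legPoly n).eval x := by
  have h := iteratedDeriv_eval ((X ^ 2 - 1) ^ n) n
  simp only [eval_pow, eval_sub, eval_X, eval_one] at h
  simp only [legendreP, legPoly, eval_mul, eval_C, h]

theorem legPoly_orth {n : ℕ} {q : ℝ[X]} (hq : q ∈ degreeLT ℝ n) :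
    polyInt (legPoly n * q) = 0 := by
  rw [legPoly, mul_assoc, polyInt_C_mul, polyInt_iterate_rodrigues n n le_rfl q hq, mul_zero]

theorem natDegree_rodrigues (n : ℕ) : ((X ^ 2 - 1 : ℝ[X]) ^ n).natDegree = 2 * n := by
  have : (X ^ 2 - 1 : ℝ[X]).natDegree = 2 := by compute_degree!
  rw [natDegree_pow, this, mul_comm]

theorem legPoly_mem (n : ℕ) : legPoly n ∈ degreeLT ℝ (n + 1) := by
  rw [mem_degreeLT_iff_coeff]
  intro k hk
  rw [legPoly, coeff_C_mul, coeff_iterate_derivative, coeff_eq_zero_of_natDegree_lt]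
  · simp
  · rw [natDegree_rodrigues]; omega

theorem legPoly_coeff_ne (n : ℕ) : (legPoly n).coeff n ≠ 0 := by
  have hm : ((X ^ 2 - 1 : ℝ[X]) ^ n).Monic := by
    apply Monic.pow
    monicity!
  have h1 : ((X ^ 2 - 1 : ℝ[X]) ^ n).coeff (n + n) = 1 := by
    have := hm.coeff_natDegree
    rwa [natDegree_rodrigues, two_mul] at this
  rw [legPoly, coeff_C_mul, coeff_iterate_derivative, h1]
  have h2 : (n + n).descFactorial n ≠ 0 := by
    rw [Ne, Nat.descFactorial_eq_zero_iff_lt]; omega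
  have h3 := Nat.factorial_ne_zero n
  simp [h2, h3]

/-- At the endpoints `±1` the Legendre polynomials take the values `±1`. -/
theorem legPoly_eval_sq (n : ℕ) {a : ℝ} (ha : a ^ 2 = 1) : (legPoly n).eval a ^ 2 = 1 := by
  have h := aeval_iterate_derivative_self ((X ^ 2 - 1 : ℝ[X]) ^ n) n a
    (p' := (X + C a) ^ n) (by
      rw [Algebra.algebraMap_self, Polynomial.map_id, ← mul_pow]
      congr 1
      have : (C a : ℝ[X]) ^ 2 = 1 := by rw [← C_pow, ha, C_1]
      linear_combination this)
  rw [coe_aeval_eq_eval] at h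
  rw [legPoly, eval_mul, eval_C, h]
  simp only [eval_pow, eval_add, eval_X, eval_C, nsmul_eq_mul]
  have h3 : (Nat.factorial n : ℝ) ≠ 0 := by exact_mod_cast Nat.factorial_ne_zero n
  have h4 : (a + a) ^ n = 2 ^ n * a ^ n := by rw [← two_mul, mul_pow]
  rw [h4]
  field_simp
  rw [← pow_mul, mul_comm, pow_mul, ha, one_pow]

/-- Normalisation of the Legendre polynomials: integrate `(x P_n²)' = P_n² + 2 P_n · x P_n'`
and use that `x P_n' - n P_n` has degree less than `n`. -/
theorem legPoly_norm (n : ℕ) : (2 * (n : ℝ) + 1) * polyInt (legPoly n * legPoly n) = 2 := by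
  have hlow : X * derivative (legPoly n) - C (n : ℝ) * legPoly n ∈ degreeLT ℝ n := by
    rw [mem_degreeLT_iff_coeff]
    intro k hk
    rw [coeff_sub, coeff_C_mul]
    have hX : (X * derivative (legPoly n)).coeff k = k * (legPoly n).coeff k := by
      cases k with
      | zero => simp
      | succ k => rw [coeff_X_mul, coeff_derivative]; push_cast; ring
    rw [hX]
    rcases hk.eq_or_lt with rfl | hk
    · ring
    · rw [mem_degreeLT_iff_coeff.1 (legPoly_mem n) k hk]; ring
  have h0 := legPoly_orth hlow
  rw [mul_sub, map_sub] at h0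
  have h1 : polyInt (legPoly n * (C (n : ℝ) * legPoly n))
      = n * polyInt (legPoly n * legPoly n) := by
    rw [← polyInt_C_mul]; congr 1; ring
  have h2 := polyInt_derivative (X * (legPoly n * legPoly n))
  have h3 : derivative (X * (legPoly n * legPoly n)) = legPoly n * legPoly n
      + C 2 * (legPoly n * (X * derivative (legPoly n))) := by
    rw [derivative_mul, derivative_mul, derivative_X]
    have : (C (2 : ℝ) : ℝ[X]) = 2 := rfl
    rw [this]; ring
  rw [h3, map_add, polyInt_C_mul] at h2
  have e1 := legPoly_eval_sq n (a := 1) (by norm_num)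
  have e2 := legPoly_eval_sq n (a := -1) (by norm_num)
  simp only [eval_mul, eval_X] at h2
  nlinarith

theorem exists_sub_legPoly_mem {n : ℕ} {q : ℝ[X]} (hq : q ∈ degreeLT ℝ (n + 1)) :
    ∃ c : ℝ, q - C c * legPoly n ∈ degreeLT ℝ n := by
  refine ⟨q.coeff n / (legPoly n).coeff n, ?_⟩
  rw [mem_degreeLT_iff_coeff] at hq ⊢
  intro k hk
  rw [coeff_sub, coeff_C_mul]
  rcases hk.eq_or_lt with rfl | hk
  · rw [div_mul_cancel₀ _ (legPoly_coeff_ne _), sub_self]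
  · rw [hq k hk, mem_degreeLT_iff_coeff.1 (legPoly_mem n) k hk]; ring

/-- `P_0, …, P_{M-1}` span the polynomials of degree less than `M`. -/
theorem functional_eq_zero (φ : ℝ[X] →ₗ[ℝ] ℝ) (M : ℕ) (h : ∀ k < M, φ (legPoly k) = 0) :
    ∀ q ∈ degreeLT ℝ M, φ q = 0 := by
  induction M with
  | zero =>
    intro q hq
    have : q = 0 := by
      ext j
      exact mem_degreeLT_iff_coeff.1 hq j (Nat.zero_le _)
    simp [this]
  | succ M ih =>
    intro q hq
    obtain ⟨c, hc⟩ := exists_sub_legPoly_mem hq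
    have h1 := ih (fun k hk => h k (by omega)) _ hc
    rw [map_sub, ← smul_eq_C_mul, map_smul, h M (by omega), smul_zero, sub_zero] at h1
    exact h1

/-! ### The Sturm-Liouville operator and its spectral gap -/

/-- Green's formula for the Sturm-Liouville operator `q ↦ -((1 - x²) q')'`. -/
theorem polyInt_weight_derivative (p q : ℝ[X]) :
    polyInt ((1 - X ^ 2) * derivative p * derivative q)
      = -polyInt (q * derivative ((1 - X ^ 2) * derivative p)) := by
  have h := polyInt_by_parts ((1 - X ^ 2) * derivative p) q (by simp) (by simp)
  rw [mul_comm q, h, neg_neg]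

theorem coeff_sturmLiouville (q : ℝ[X]) (k : ℕ) :
    (derivative ((1 - X ^ 2) * derivative q)).coeff k
      = (k + 1) * (k + 2) * q.coeff (k + 2) - k * (k + 1) * q.coeff k := by
  have e : (1 - X ^ 2) * derivative q = derivative q - X * (X * derivative q) := by ring
  rw [e, coeff_derivative, coeff_sub, coeff_X_mul, coeff_derivative]
  cases k with
  | zero => simp; ring
  | succ k =>
    rw [coeff_X_mul, coeff_derivative]; push_cast; ring

theorem sturmLiouville_mem {n : ℕ} {q : ℝ[X]} (hq : q ∈ degreeLT ℝ n) :
    derivative ((1 - X ^ 2) * derivative q) ∈ degreeLT ℝ n := by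
  rw [mem_degreeLT_iff_coeff] at hq ⊢
  intro k hk
  rw [coeff_sturmLiouville, hq k hk, hq (k + 2) (by omega)]
  ring

/-- The weighted Dirichlet energy of `P_n` is `n (n + 1)` times its squared norm, since
`((1 - x²) P_n')' + n (n + 1) P_n` has degree less than `n`. -/
theorem legPoly_energy (n : ℕ) :
    polyInt ((1 - X ^ 2) * derivative (legPoly n) * derivative (legPoly n))
      = n * (n + 1) * polyInt (legPoly n * legPoly n) := by
  have hlow : derivative ((1 - X ^ 2) * derivative (legPoly n))
      + C ((n : ℝ) * (n + 1)) * legPoly n ∈ degreeLT ℝ n := by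
    rw [mem_degreeLT_iff_coeff]
    intro k hk
    have hP := mem_degreeLT_iff_coeff.1 (legPoly_mem n)
    rw [coeff_add, coeff_C_mul, coeff_sturmLiouville, hP (k + 2) (by omega)]
    rcases hk.eq_or_lt with rfl | hk
    · ring
    · rw [hP k hk]; ring
  have h0 := legPoly_orth hlow
  rw [mul_add, map_add] at h0
  have h1 : polyInt (legPoly n * (C ((n : ℝ) * (n + 1)) * legPoly n))
      = n * (n + 1) * polyInt (legPoly n * legPoly n) := by
    rw [← polyInt_C_mul]; congr 1; ring
  rw [polyInt_weight_derivative]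
  linarith

/-- The spectral gap of the Legendre operator on polynomials orthogonal to those of degree
less than `M`. The induction peels off the leading Legendre component, which is orthogonal to the
rest both in `L²` and in the weighted energy. -/
theorem spectral_gap (M n : ℕ) : ∀ p ∈ degreeLT ℝ n,
    (∀ q ∈ degreeLT ℝ M, polyInt (p * q) = 0) →
    (M : ℝ) * (M + 1) * polyInt (p * p)
      ≤ polyInt ((1 - X ^ 2) * derivative p * derivative p) := by
  induction n with
  | zero =>
    intro p hp hM
    have : p = 0 := by
      ext j
      exact mem_degreeLT_iff_coeff.1 hp j (Nat.zero_le _)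
    simp [this]
  | succ n ih =>
    intro p hp hM
    rcases lt_or_ge n M with hn | hn
    · rw [hM p (mem_degreeLT_mono hn hp), mul_zero]
      exact polyInt_weight_nonneg _
    · obtain ⟨c, hc⟩ := exists_sub_legPoly_mem hp
      set s := p - C c * legPoly n with hs
      have hp' : p = C c * legPoly n + s := by rw [hs]; ring
      have hs' : ∀ q ∈ degreeLT ℝ M, polyInt (s * q) = 0 := by
        intro q hq
        have h1 : s * q = p * q - C c * (legPoly n * q) := by rw [hs]; ring
        rw [h1, map_sub, hM q hq, polyInt_C_mul, legPoly_orth (mem_degreeLT_mono hn hq)]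
        ring
      have h := ih s hc hs'
      have e1 : polyInt (p * p) = c ^ 2 * polyInt (legPoly n * legPoly n) + polyInt (s * s) := by
        have : p * p = C (c ^ 2) * (legPoly n * legPoly n)
            + C (2 * c) * (legPoly n * s) + s * s := by
          rw [hp', C_mul, C_pow]
          have : (C (2 : ℝ) : ℝ[X]) = 2 := rfl
          rw [this]; ring
        rw [this, map_add, map_add, polyInt_C_mul, polyInt_C_mul, legPoly_orth hc]
        ring
      have e2 : polyInt ((1 - X ^ 2) * derivative p * derivative p)
          = c ^ 2 * (n * (n + 1) * polyInt (legPoly n * legPoly n))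
            + polyInt ((1 - X ^ 2) * derivative s * derivative s) := by
        have : (1 - X ^ 2) * derivative p * derivative p
            = C (c ^ 2) * ((1 - X ^ 2) * derivative (legPoly n) * derivative (legPoly n))
            + C (2 * c) * ((1 - X ^ 2) * derivative s * derivative (legPoly n))
            + (1 - X ^ 2) * derivative s * derivative s := by
          rw [hp', C_mul, C_pow, derivative_add, derivative_C_mul]
          have : (C (2 : ℝ) : ℝ[X]) = 2 := rfl
          rw [this]; ring
        rw [this, map_add, map_add, polyInt_C_mul, polyInt_C_mul, legPoly_energy,
          polyInt_weight_derivative s, legPoly_orth (sturmLiouville_mem hc)]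
        ring
      rw [e1, e2]
      have hnn : (M : ℝ) * (M + 1) ≤ n * (n + 1) := by
        have : (M : ℝ) ≤ n := by exact_mod_cast hn
        have : (0 : ℝ) ≤ M := Nat.cast_nonneg M
        gcongr
      have := mul_le_mul_of_nonneg_right hnn
        (mul_nonneg (sq_nonneg c) (polyInt_sq_nonneg (legPoly n)))
      nlinarith

/-! ### The truncated series as best approximation -/

/-- The truncated Legendre series as an element of `ℝ[X]`. -/
noncomputable def legTruncPoly (M : ℕ) (f : ℝ → ℝ) : ℝ[X] :=
  ∑ k ∈ Finset.range M,
    C (((2 * (k : ℝ) + 1) / 2) * ∫ t in (-1 : ℝ)..1, f t * (legPoly k).eval t) * legPoly k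

theorem legTrunc_eq_eval (M : ℕ) (f : ℝ → ℝ) (x : ℝ) :
    legTrunc M f x = (legTruncPoly M f).eval x := by
  simp only [legTrunc, legTruncPoly, eval_finsetSum, eval_mul, eval_C, legendreP_eq_eval]

theorem legTruncPoly_mem (M : ℕ) (f : ℝ → ℝ) : legTruncPoly M f ∈ degreeLT ℝ M := by
  refine Submodule.sum_mem _ fun k hk => ?_
  rw [← smul_eq_C_mul]
  exact Submodule.smul_mem _ _
    (mem_degreeLT_mono (Finset.mem_range.1 hk) (legPoly_mem k))

theorem legPoly_orth_of_ne {i j : ℕ} (h : i ≠ j) : polyInt (legPoly i * legPoly j) = 0 := by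
  rcases lt_or_gt_of_ne h with h | h
  · rw [mul_comm]; exact legPoly_orth (mem_degreeLT_mono h (legPoly_mem i))
  · exact legPoly_orth (mem_degreeLT_mono h (legPoly_mem j))

/-- Integration over `[-1, 1]` against a fixed continuous function `f`, on polynomials. -/
noncomputable def pairInt (f : ℝ → ℝ) (hf : Continuous f) : ℝ[X] →ₗ[ℝ] ℝ where
  toFun p := ∫ x in (-1 : ℝ)..1, f x * p.eval x
  map_add' p q := by
    simp only [eval_add, mul_add]
    exact intervalIntegral.integral_add ((hf.mul p.continuous).intervalIntegrable _ _)
      ((hf.mul q.continuous).intervalIntegrable _ _)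
  map_smul' c p := by
    simp only [eval_smul, smul_eq_mul, mul_left_comm _ c, RingHom.id_apply,
      intervalIntegral.integral_const_mul]

theorem pairInt_apply (f : ℝ → ℝ) (hf : Continuous f) (p : ℝ[X]) :
    pairInt f hf p = ∫ x in (-1 : ℝ)..1, f x * p.eval x := rfl

theorem pairInt_legTruncPoly (f : ℝ → ℝ) (hf : Continuous f) (M : ℕ) :
    ∀ q ∈ degreeLT ℝ M, pairInt f hf q = polyInt (legTruncPoly M f * q) := by
  intro q hq
  have h := functional_eq_zero
    (pairInt f hf - polyInt ∘ₗ LinearMap.mulLeft ℝ (legTruncPoly M f)) M (fun k hk => ?_) q hq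
  · simpa [sub_eq_zero] using h
  · simp only [LinearMap.sub_apply, LinearMap.comp_apply, LinearMap.mulLeft_apply]
    rw [legTruncPoly, Finset.sum_mul, map_sum, Finset.sum_eq_single k]
    · rw [mul_assoc, polyInt_C_mul, pairInt_apply]
      have := legPoly_norm k
      linear_combination -((∫ x in (-1 : ℝ)..1, f x * (legPoly k).eval x) / 2) * this
    · intro i _ hi
      rw [mul_assoc, polyInt_C_mul, legPoly_orth_of_ne hi, mul_zero]
    · intro h
      exact absurd (Finset.mem_range.2 hk) h

theorem integral_sub_sq (f : ℝ → ℝ) (hf : Continuous f) (q : ℝ[X]) :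
    ∫ x in (-1 : ℝ)..1, (f x - q.eval x) ^ 2
      = (∫ x in (-1 : ℝ)..1, f x ^ 2) - 2 * pairInt f hf q + polyInt (q * q) := by
  have i1 : IntervalIntegrable (fun x => f x ^ 2) MeasureTheory.volume (-1) 1 :=
    (hf.pow 2).intervalIntegrable _ _
  have i2 : IntervalIntegrable (fun x => 2 * (f x * q.eval x)) MeasureTheory.volume (-1) 1 :=
    ((hf.mul q.continuous).const_mul 2).intervalIntegrable _ _
  have i3 : IntervalIntegrable (fun x => (q * q).eval x) MeasureTheory.volume (-1) 1 :=
    (q * q).continuous.intervalIntegrable _ _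
  rw [pairInt_apply, polyInt_apply, ← intervalIntegral.integral_const_mul,
    ← intervalIntegral.integral_sub i1 i2, ← intervalIntegral.integral_add (i1.sub i2) i3]
  congr 1
  ext x
  rw [eval_mul]
  ring

/-- `L_{M-1} f` is the best `L²` approximation of `f` by polynomials of degree less than `M`. -/
theorem legTrunc_best (M : ℕ) (f : ℝ → ℝ) (hf : Continuous f) {q : ℝ[X]}
    (hq : q ∈ degreeLT ℝ M) :
    ∫ x in (-1 : ℝ)..1, (f x - legTrunc M f x) ^ 2
      ≤ ∫ x in (-1 : ℝ)..1, (f x - q.eval x) ^ 2 := by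
  simp only [legTrunc_eq_eval]
  rw [integral_sub_sq f hf, integral_sub_sq f hf,
    pairInt_legTruncPoly f hf M _ (legTruncPoly_mem M f), pairInt_legTruncPoly f hf M _ hq]
  set L := legTruncPoly M f
  have h := polyInt_sq_nonneg (L - q)
  have e : (L - q) * (L - q) = L * L - C 2 * (L * q) + q * q := by
    have : (C (2 : ℝ) : ℝ[X]) = 2 := rfl
    rw [this]; ring
  rw [e, map_add, map_sub, polyInt_C_mul] at h
  linarith

/-! ### The first-order estimate -/

/-- The first-order estimate for polynomials: the energy splits orthogonally between the truncated
series and the remainder, and the spectral gap applies to the remainder. -/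
theorem poly_estimate (M : ℕ) (p : ℝ[X]) : ∃ q ∈ degreeLT ℝ M,
    (M : ℝ) ^ 2 * polyInt ((p - q) * (p - q)) ≤ polyInt (derivative p * derivative p) := by
  set L := legTruncPoly M (fun x => p.eval x) with hL
  have hLm : L ∈ degreeLT ℝ M := legTruncPoly_mem _ _
  refine ⟨L, hLm, ?_⟩
  set r := p - L with hr
  have horth : ∀ q ∈ degreeLT ℝ M, polyInt (r * q) = 0 := by
    intro q hq
    have h := pairInt_legTruncPoly (fun x => p.eval x) p.continuous M q hq
    have h' : pairInt (fun x => p.eval x) p.continuous q = polyInt (p * q) := by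
      simp only [pairInt_apply, polyInt_apply, eval_mul]
    rw [hr, sub_mul, map_sub, ← h', h, sub_self]
  have hrm : r ∈ degreeLT ℝ (r.natDegree + 1) := by
    rw [mem_degreeLT_iff_coeff]
    intro k hk
    exact coeff_eq_zero_of_natDegree_lt (by omega)
  have hgap := spectral_gap M _ r hrm horth
  have hsplit : (1 - X ^ 2) * derivative p * derivative p
      = (1 - X ^ 2) * derivative r * derivative r
        + C 2 * ((1 - X ^ 2) * derivative L * derivative r)
        + (1 - X ^ 2) * derivative L * derivative L := by
    have e : p = r + L := by rw [hr]; ring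
    have : (C (2 : ℝ) : ℝ[X]) = 2 := rfl
    rw [e, derivative_add, this]
    ring
  have hE : polyInt ((1 - X ^ 2) * derivative r * derivative r)
      ≤ polyInt ((1 - X ^ 2) * derivative p * derivative p) := by
    rw [hsplit, map_add, map_add, polyInt_C_mul, polyInt_weight_derivative L r,
      horth _ (sturmLiouville_mem hLm)]
    linarith [polyInt_weight_nonneg (derivative L)]
  have hM : (M : ℝ) ^ 2 * polyInt (r * r) ≤ M * (M + 1) * polyInt (r * r) := by
    refine mul_le_mul_of_nonneg_right ?_ (polyInt_sq_nonneg r)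
    nlinarith [Nat.cast_nonneg (α := ℝ) M]
  linarith [polyInt_weight_le (derivative p)]

theorem exists_antiderivative {n : ℕ} {q : ℝ[X]} (hq : q ∈ degreeLT ℝ n) :
    ∃ Q ∈ degreeLT ℝ (n + 1), derivative Q = q := by
  refine ⟨∑ i ∈ Finset.range n, monomial (i + 1) (q.coeff i / (i + 1)), ?_, ?_⟩
  · refine Submodule.sum_mem _ fun i hi => ?_
    rw [mem_degreeLT_iff_coeff]
    intro k hk
    rw [coeff_monomial, if_neg]
    have := Finset.mem_range.1 hi
    omega
  · rw [derivative_sum]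
    ext k
    rw [finsetSum_coeff]
    simp only [derivative_monomial, Nat.add_sub_cancel, coeff_monomial, Finset.sum_ite_eq',
      Finset.mem_range]
    split_ifs with h
    · push_cast
      have : (k : ℝ) + 1 ≠ 0 := by positivity
      field_simp
    · rw [mem_degreeLT_iff_coeff.1 hq k (by omega)]

/-- Weierstrass approximation in `C¹([-1, 1])`. -/
theorem exists_C1_near (f : ℝ → ℝ) (hf : ContDiff ℝ 1 f) {δ : ℝ} (hδ : 0 < δ) :
    ∃ p : ℝ[X], ∀ x ∈ Set.Icc (-1 : ℝ) 1,
      |f x - p.eval x| ≤ δ ∧ |deriv f x - (derivative p).eval x| ≤ δ := by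
  obtain ⟨g, hg⟩ := exists_polynomial_near_of_continuousOn (-1) 1 (deriv f)
    (hf.continuous_deriv le_rfl).continuousOn δ hδ
  obtain ⟨G, -, hG⟩ := exists_antiderivative (n := g.natDegree + 1) (q := g) (by
    rw [mem_degreeLT_iff_coeff]
    intro k hk
    exact coeff_eq_zero_of_natDegree_lt (by omega))
  have hd : Differentiable ℝ f := hf.differentiable one_ne_zero
  refine ⟨G + C (f 0 - G.eval 0), fun x hx => ?_⟩
  have key : ∀ y ∈ Set.Icc (-1 : ℝ) 1, |deriv f y - g.eval y| ≤ δ := by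
    intro y hy
    rw [abs_sub_comm]
    exact (hg y hy).le
  refine ⟨?_, ?_⟩
  · have h := Convex.norm_image_sub_le_of_norm_hasDerivWithin_le
      (f := fun y => f y - G.eval y) (f' := fun y => deriv f y - g.eval y) (C := δ)
      (s := Set.Icc (-1 : ℝ) 1) (x := 0) (y := x)
      (fun y _ => ((hd y).hasDerivAt.sub (hG ▸ G.hasDerivAt y)).hasDerivWithinAt)
      key (convex_Icc _ _) (by norm_num) hx
    simp only [Real.norm_eq_abs, sub_zero] at h
    have hx' : |x| ≤ 1 := abs_le.2 hx
    rw [eval_add, eval_C]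
    calc |f x - (G.eval x + (f 0 - G.eval 0))|
        = |f x - G.eval x - (f 0 - G.eval 0)| := by congr 1; ring
      _ ≤ δ * |x| := h
      _ ≤ δ := by nlinarith
  · rw [derivative_add, derivative_C, add_zero, hG]
    exact key x hx

/-- A quantitative substitute for the triangle inequality: if `|f - g| ≤ δ` on `[-1, 1]` then
`‖f‖² ≤ (1 + δ) ‖g‖² + 2 δ (1 + δ)`, by `2 a b ≤ δ a² + b² / δ`. -/
theorem integral_sq_le {f g : ℝ → ℝ} (hf : Continuous f) (hg : Continuous g) {δ : ℝ}
    (hδ : 0 < δ) (h : ∀ x ∈ Set.Icc (-1 : ℝ) 1, |f x - g x| ≤ δ) :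
    ∫ x in (-1 : ℝ)..1, f x ^ 2
      ≤ (1 + δ) * (∫ x in (-1 : ℝ)..1, g x ^ 2) + 2 * (δ * (1 + δ)) := by
  have hc : ∫ _ in (-1 : ℝ)..1, δ * (1 + δ) = 2 * (δ * (1 + δ)) := by
    rw [intervalIntegral.integral_const, smul_eq_mul]; ring
  have i1 : IntervalIntegrable (fun x => (1 + δ) * g x ^ 2) MeasureTheory.volume (-1) 1 :=
    ((hg.pow 2).const_mul _).intervalIntegrable _ _
  have i2 : IntervalIntegrable (fun _ : ℝ => δ * (1 + δ)) MeasureTheory.volume (-1) 1 :=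
    continuous_const.intervalIntegrable _ _
  rw [← intervalIntegral.integral_const_mul, ← hc, ← intervalIntegral.integral_add i1 i2]
  refine intervalIntegral.integral_mono_on (by norm_num) ((hf.pow 2).intervalIntegrable _ _)
    (i1.add i2) fun x hx => ?_
  have hx' := abs_le.1 (h x hx)
  obtain ⟨e, he⟩ : ∃ e, f x = g x + e := ⟨f x - g x, by ring⟩
  rw [he] at hx' ⊢
  obtain ⟨h1, h2⟩ := hx'
  have h3 : e ^ 2 ≤ δ ^ 2 := by nlinarith
  -- `2 g e ≤ δ g² + e² / δ`, multiplied by `δ`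
  have h4 : 0 ≤ (δ * g x - e) ^ 2 := sq_nonneg _
  have h5 : δ * (2 * g x * e) ≤ δ * (δ * g x ^ 2 + δ) := by nlinarith
  have h6 := le_of_mul_le_mul_left h5 hδ
  nlinarith

/-- The first-order estimate `M ‖f - L_{M-1} f‖ ≤ ‖f'‖`, by density of polynomials in `C¹`. -/
theorem C1_estimate (M : ℕ) (f : ℝ → ℝ) (hf : ContDiff ℝ 1 f) :
    (M : ℝ) ^ 2 * ∫ x in (-1 : ℝ)..1, (f x - legTrunc M f x) ^ 2
      ≤ ∫ x in (-1 : ℝ)..1, deriv f x ^ 2 := by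
  set E := ∫ x in (-1 : ℝ)..1, (f x - legTrunc M f x) ^ 2
  set I := ∫ x in (-1 : ℝ)..1, deriv f x ^ 2
  have hf' : Continuous (deriv f) := hf.continuous_deriv le_rfl
  have hbound : ∀ δ : ℝ, 0 < δ → (M : ℝ) ^ 2 * E ≤
      (1 + δ) * ((1 + δ) * I + 2 * (δ * (1 + δ))) + (M : ℝ) ^ 2 * (2 * (δ * (1 + δ))) := by
    intro δ hδ
    obtain ⟨p, hp⟩ := exists_C1_near f hf hδ
    obtain ⟨q, hq, hpq⟩ := poly_estimate M p
    have h1 : E ≤ ∫ x in (-1 : ℝ)..1, (f x - q.eval x) ^ 2 := legTrunc_best M f hf.continuous hq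
    have h2 := integral_sq_le (f := fun x => f x - q.eval x) (g := fun x => (p - q).eval x)
      (hf.continuous.sub q.continuous) (p - q).continuous hδ (fun x hx => by
        rw [eval_sub, sub_sub_sub_cancel_right]
        exact (hp x hx).1)
    have h3 := integral_sq_le (f := fun x => (derivative p).eval x) (g := deriv f)
      (derivative p).continuous hf' hδ (fun x hx => by
        rw [abs_sub_comm]
        exact (hp x hx).2)
    have e1 : polyInt ((p - q) * (p - q)) = ∫ x in (-1 : ℝ)..1, ((p - q).eval x) ^ 2 := by
      simp only [polyInt_apply, eval_mul, sq]
    have e2 : polyInt (derivative p * derivative p)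
        = ∫ x in (-1 : ℝ)..1, ((derivative p).eval x) ^ 2 := by
      simp only [polyInt_apply, eval_mul, sq]
    rw [e1, e2] at hpq
    have h4 := mul_le_mul_of_nonneg_left (h1.trans h2) (sq_nonneg (M : ℝ))
    have h5 := mul_le_mul_of_nonneg_left (hpq.trans h3) (by linarith : 0 ≤ 1 + δ)
    calc _ ≤ _ := h4
      _ = (1 + δ) * ((M : ℝ) ^ 2 * ∫ x in (-1 : ℝ)..1, ((p - q).eval x) ^ 2)
          + (M : ℝ) ^ 2 * (2 * (δ * (1 + δ))) := by ring
      _ ≤ _ := by gcongr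
  have hlim : Filter.Tendsto (fun δ : ℝ => (1 + δ) * ((1 + δ) * I + 2 * (δ * (1 + δ)))
      + (M : ℝ) ^ 2 * (2 * (δ * (1 + δ)))) (nhdsWithin 0 (Set.Ioi 0)) (nhds I) := by
    have hcont : Continuous (fun δ : ℝ => (1 + δ) * ((1 + δ) * I + 2 * (δ * (1 + δ)))
      + (M : ℝ) ^ 2 * (2 * (δ * (1 + δ)))) := by fun_prop
    have := (hcont.tendsto 0).mono_left (nhdsWithin_le_nhds (s := Set.Ioi 0))
    simpa using this
  exact ge_of_tendsto hlim (Filter.eventually_of_mem self_mem_nhdsWithin hbound)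

/-! ### Estimates of higher order -/

/-- The estimate of order `j`. In the inductive step the first-order estimate is applied to
`f - Q`, where `Q` is an antiderivative of the truncated series of `f'`. -/
theorem higher_estimate (j : ℕ) : ∀ M : ℕ, j ≤ M → ∀ f : ℝ → ℝ, ContDiff ℝ j f →
    (M.descFactorial j : ℝ) ^ 2 * ∫ x in (-1 : ℝ)..1, (f x - legTrunc M f x) ^ 2
      ≤ ∫ x in (-1 : ℝ)..1, iteratedDeriv j f x ^ 2 := by
  induction j with
  | zero =>
    intro M _ f hf
    have h := legTrunc_best M f hf.continuous (Submodule.zero_mem _)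
    simpa using h
  | succ j ih =>
    intro M hM f hf
    obtain ⟨N, rfl⟩ : ∃ N, M = N + 1 := ⟨M - 1, by omega⟩
    have hf1 : ContDiff ℝ 1 f := hf.of_le (by exact_mod_cast Nat.succ_le_succ (Nat.zero_le j))
    have hd : Differentiable ℝ f := hf1.differentiable one_ne_zero
    have hf' : ContDiff ℝ j (deriv f) := by
      rw [Nat.cast_succ, contDiff_succ_iff_deriv] at hf
      exact hf.2.2
    have h := ih N (by omega) (deriv f) hf'
    obtain ⟨Q, hQ, hQ'⟩ := exists_antiderivative (legTruncPoly_mem N (deriv f))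
    set g : ℝ → ℝ := fun x => f x - Q.eval x with hg
    have hgC : ContDiff ℝ 1 g := hf1.sub (by simpa using Q.contDiff_aeval (𝕜 := ℝ) (R := ℝ) 1)
    have hgd : ∀ x, deriv g x = deriv f x - legTrunc N (deriv f) x := by
      intro x
      rw [legTrunc_eq_eval, ← hQ']
      exact ((hd x).hasDerivAt.sub (Q.hasDerivAt x)).deriv
    have h1 := C1_estimate (N + 1) g hgC
    simp only [hgd] at h1
    have h2 := legTrunc_best (N + 1) f hf1.continuous
      (Submodule.add_mem _ hQ (legTruncPoly_mem (N + 1) g))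
    have h3 : ∫ x in (-1 : ℝ)..1, (f x - (Q + legTruncPoly (N + 1) g).eval x) ^ 2
        = ∫ x in (-1 : ℝ)..1, (g x - legTrunc (N + 1) g x) ^ 2 := by
      simp only [legTrunc_eq_eval, eval_add, hg, sub_sub]
    rw [h3] at h2
    rw [iteratedDeriv_succ', Nat.succ_descFactorial_succ]
    refine le_trans ?_ h
    push_cast at h1 ⊢
    calc _ = (N.descFactorial j : ℝ) ^ 2 * (((N : ℝ) + 1) ^ 2
          * ∫ x in (-1 : ℝ)..1, (f x - legTrunc (N + 1) f x) ^ 2) := by ring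
      _ ≤ _ := by
        refine mul_le_mul_of_nonneg_left (le_trans ?_ h1) (sq_nonneg _)
        exact mul_le_mul_of_nonneg_left h2 (sq_nonneg _)

/-- The factor gained from `min m M` derivatives dominates `(M - 1)^m`, up to `m ^ m`. -/
theorem pow_le_descFactorial (m M : ℕ) (hm : 1 ≤ m) (hM : 2 ≤ M) :
    (M - 1) ^ m ≤ m ^ m * M.descFactorial (min m M) := by
  rcases le_total m M with h | h
  · rw [min_eq_left h]
    calc (M - 1) ^ m ≤ (m * (M + 1 - m)) ^ m := by
          refine Nat.pow_le_pow_left ?_ m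
          obtain ⟨a, rfl⟩ := Nat.exists_eq_add_of_le h
          have : m + a + 1 - m = a + 1 := by omega
          rw [this]
          have : a ≤ m * a := Nat.le_mul_of_pos_left a hm
          rw [mul_add]
          omega
      _ = m ^ m * (M + 1 - m) ^ m := Nat.mul_pow _ _ _
      _ ≤ _ := Nat.mul_le_mul_left _ (Nat.pow_sub_le_descFactorial M m)
  · rw [min_eq_right h]
    have h1 : 1 ≤ M.descFactorial M := by
      rw [Nat.descFactorial_self]; exact Nat.factorial_pos M
    calc (M - 1) ^ m ≤ m ^ m := Nat.pow_le_pow_left (by omega) m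
      _ ≤ _ := Nat.le_mul_of_pos_right _ h1

/-- (Equation (18) of the paper, after Canuto et al.)
`‖f - L_{M-1}(f)‖_{L²(-1,1)} ≤ C (M-1)^{-m} |f|_{H^{m,M-1}(-1,1)}`. -/
theorem stmt_5 (m : ℕ) (hm : 1 ≤ m) :
    ∃ C : ℝ, 0 < C ∧ ∀ M : ℕ, 2 ≤ M →
      ∀ f : ℝ → ℝ, ContDiff ℝ m f →
        Real.sqrt (∫ x in (-1 : ℝ)..1, (f x - legTrunc M f x) ^ 2)
          ≤ C * ((M : ℝ) - 1) ^ (-(m : ℤ)) * legSemiNorm m M f := by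
  refine ⟨(m : ℝ) ^ m, pow_pos (by exact_mod_cast hm) m, fun M hM f hf => ?_⟩
  set j := min m M with hj
  have hfj : ContDiff ℝ j f := hf.of_le (by exact_mod_cast min_le_left m M)
  have h := higher_estimate j M (min_le_right _ _) f hfj
  set E := ∫ x in (-1 : ℝ)..1, (f x - legTrunc M f x) ^ 2 with hE
  have hsemi : Real.sqrt (∫ x in (-1 : ℝ)..1, iteratedDeriv j f x ^ 2) ≤ legSemiNorm m M f := by
    refine Real.sqrt_le_sqrt ?_
    refine Finset.single_le_sum
      (f := fun i => ∫ x in (-1 : ℝ)..1, iteratedDeriv i f x ^ 2) (fun i _ => ?_)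
      (Finset.mem_Icc.2 ⟨le_rfl, min_le_left m M⟩)
    exact intervalIntegral.integral_nonneg (by norm_num) fun x _ => sq_nonneg _
  have hsqrt := Real.sqrt_le_sqrt h
  rw [Real.sqrt_mul (sq_nonneg _), Real.sqrt_sq (Nat.cast_nonneg _)] at hsqrt
  have hpow : ((M : ℝ) - 1) ^ m ≤ (m : ℝ) ^ m * M.descFactorial j := by
    have := pow_le_descFactorial m M hm hM
    have h' : (((M - 1 : ℕ) : ℝ)) ^ m ≤ (m : ℝ) ^ m * M.descFactorial j := by exact_mod_cast this
    rwa [Nat.cast_sub (by omega), Nat.cast_one] at h'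
  have hM1 : (0 : ℝ) < (M : ℝ) - 1 := by
    have : (2 : ℝ) ≤ M := by exact_mod_cast hM
    linarith
  have hfin : ((M : ℝ) - 1) ^ m * Real.sqrt E ≤ (m : ℝ) ^ m * legSemiNorm m M f := by
    calc _ ≤ ((m : ℝ) ^ m * M.descFactorial j) * Real.sqrt E :=
          mul_le_mul_of_nonneg_right hpow (Real.sqrt_nonneg _)
      _ = (m : ℝ) ^ m * (M.descFactorial j * Real.sqrt E) := by ring
      _ ≤ _ := mul_le_mul_of_nonneg_left (hsqrt.trans hsemi) (by positivity)
  rw [zpow_neg, zpow_natCast, mul_right_comm, ← div_eq_mul_inv, le_div_iff₀ (pow_pos hM1 m)]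
  linarith
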